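/- Characterization of defeasible provability: for every propositional defeasible theory T and literal q, T ⊢ +∂q if and only if M_∂(q)=True for every defeasible model M of T. -/

import Mathlib

/-- A literal is an atom or its negation. -/
inductive Lit (Atom : Type) where
  | pos : Atom → Lit Atom
  | neg : Atom → Lit Atom
  deriving DecidableEq

/-- The complement `~q` of a literal `q`. -/
def Lit.compl {Atom : Type} : Lit Atom → Lit Atom
  | .pos a => .neg a
  | .neg a => .pos a

/-- The three kinds of rules: strict, defeasible, defeater. -/
inductive RuleKind where
  | strict
  | defeasible
  | defeater
  deriving DecidableEq

/-- A rule: a kind, a finite set of literals as body (antecedent), and a head literal. -/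
structure DRule (Atom : Type) where
  kind : RuleKind
  body : Finset (Lit Atom)
  head : Lit Atom
  deriving DecidableEq

/-- A rule is strict-or-defeasible (a "supportive" rule). -/
def DRule.isSd {Atom : Type} (r : DRule Atom) : Prop :=
  r.kind = RuleKind.strict ∨ r.kind = RuleKind.defeasible

/-- A propositional defeasible theory: finite set of facts, finite set of rules,
and a superiority relation on rules. -/
structure DTheory (Atom : Type) where
  facts : Finset (Lit Atom)
  rules : Finset (DRule Atom)
  sup : DRule Atom → DRule Atom → Prop

/-- Acyclicity of the superiority relation. -/
def SupAcyclic {Atom : Type} (T : DTheory Atom) : Prop :=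
  ∀ r : DRule Atom, ¬ Relation.TransGen T.sup r r

/-- Conclusions: tagged literals +Δq, -Δq, +∂q, -∂q. -/
inductive Concl (Atom : Type) where
  | plusDelta : Lit Atom → Concl Atom
  | minusDelta : Lit Atom → Concl Atom
  | plusPartial : Lit Atom → Concl Atom
  | minusPartial : Lit Atom → Concl Atom
  deriving DecidableEq

/-- The inference rules of DL: `Licensed T prev c` holds when the conclusion `c`
may be appended to a derivation whose preceding part is `prev`. -/
def Licensed {Atom : Type} (T : DTheory Atom)
    (prev : List (Concl Atom)) : Concl Atom → Prop
  | .plusDelta q =>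
      q ∈ T.facts ∨
      ∃ r ∈ T.rules, r.kind = RuleKind.strict ∧ r.head = q ∧
        ∀ a ∈ r.body, Concl.plusDelta a ∈ prev
  | .minusDelta q =>
      q ∉ T.facts ∧
      ∀ r ∈ T.rules, r.kind = RuleKind.strict → r.head = q →
        ∃ a ∈ r.body, Concl.minusDelta a ∈ prev
  | .plusPartial q =>
      (Concl.plusDelta q ∈ prev) ∨
      ((∃ r ∈ T.rules, r.isSd ∧ r.head = q ∧
          ∀ a ∈ r.body, Concl.plusPartial a ∈ prev) ∧
       (Concl.minusDelta q.compl ∈ prev) ∧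
       ∀ s ∈ T.rules, s.head = q.compl →
         ((∃ a ∈ s.body, Concl.minusPartial a ∈ prev) ∨
          (∃ t ∈ T.rules, t.isSd ∧ t.head = q ∧ T.sup t s ∧
            ∀ a ∈ t.body, Concl.plusPartial a ∈ prev)))
  | .minusPartial q =>
      (Concl.minusDelta q ∈ prev) ∧
      ((∀ r ∈ T.rules, r.isSd → r.head = q →
          ∃ a ∈ r.body, Concl.minusPartial a ∈ prev) ∨
       (Concl.plusDelta q.compl ∈ prev) ∨
       (∃ s ∈ T.rules, s.head = q.compl ∧
          (∀ a ∈ s.body, Concl.plusPartial a ∈ prev) ∧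
          ∀ t ∈ T.rules, t.isSd → t.head = q →
            ((∃ a ∈ t.body, Concl.minusPartial a ∈ prev) ∨ ¬ T.sup t s)))

/-- A derivation: each element of the sequence is licensed given the preceding part. -/
def DLDerivation {Atom : Type} (T : DTheory Atom)
    (P : List (Concl Atom)) : Prop :=
  ∀ i : Fin P.length, Licensed T (P.take i) (P.get i)

/-- `T ⊢ c`: some derivation in `T` ends with conclusion `c`. -/
def DLProves {Atom : Type} (T : DTheory Atom) (c : Concl Atom) : Prop :=
  ∃ P : List (Concl Atom), DLDerivation T P ∧ P.getLast? = some c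

/-- A defeasible interpretation: two partial functions from literals to booleans
(modelled as `Option Bool`-valued functions), `del` for definite knowledge (Δ) and
`par` for defeasible belief (∂). -/
structure DInterp (Atom : Type) where
  del : Lit Atom → Option Bool
  par : Lit Atom → Option Bool

/-- The coherence conditions on defeasible interpretations: what is known is believed,
and what is not believed is not known. -/
def DInterp.Coherent {Atom : Type} (I : DInterp Atom) : Prop :=
  (∀ q : Lit Atom, I.del q = some true → I.par q = some true) ∧
  (∀ q : Lit Atom, I.par q = some false → I.del q = some false)

open Classical in
/-- Kleene conjunction of a partial boolean function over a finite set of literals: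
`False` if some member maps to `False`, `True` if every member maps to `True`,
undefined otherwise. -/
noncomputable def kleeneAll {Atom : Type} (f : Lit Atom → Option Bool)
    (S : Finset (Lit Atom)) : Option Bool :=
  if ∃ a ∈ S, f a = some false then some false
  else if ∀ a ∈ S, f a = some true then some true
  else none

/-- The four model conditions (MΔ+), (MΔ-), (M∂+), (M∂-). -/
def ModelConditions {Atom : Type} (T : DTheory Atom)
    (I : DInterp Atom) : Prop :=
  (∀ q : Lit Atom,
    I.del q = some true ↔
      (q ∈ T.facts ∨
       ∃ r ∈ T.rules, r.kind = RuleKind.strict ∧ r.head = q ∧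
         kleeneAll I.del r.body = some true)) ∧
  (∀ q : Lit Atom,
    I.del q = some false ↔
      (q ∉ T.facts ∧
       ∀ r ∈ T.rules, r.kind = RuleKind.strict → r.head = q →
         kleeneAll I.del r.body = some false)) ∧
  (∀ q : Lit Atom,
    I.par q = some true ↔
      (I.del q = some true ∨
       ((∃ r ∈ T.rules, r.isSd ∧ r.head = q ∧ kleeneAll I.par r.body = some true) ∧
        I.del q.compl = some false ∧
        ∀ s ∈ T.rules, s.head = q.compl →
          (kleeneAll I.par s.body = some false ∨
           ∃ t ∈ T.rules, t.isSd ∧ t.head = q ∧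
             kleeneAll I.par t.body = some true ∧ T.sup t s)))) ∧
  (∀ q : Lit Atom,
    I.par q = some false ↔
      (I.del q = some false ∧
       ((∀ r ∈ T.rules, r.isSd → r.head = q → kleeneAll I.par r.body = some false) ∨
        I.del q.compl = some true ∨
        (∃ s ∈ T.rules, s.head = q.compl ∧ kleeneAll I.par s.body = some true ∧
          ∀ t ∈ T.rules, t.isSd → t.head = q →
            (kleeneAll I.par t.body = some false ∨ ¬ T.sup t s)))))

/-- A defeasible model of `T`: a defeasible interpretation (coherent pair of partial
functions) satisfying the four model conditions. -/
def IsModel {Atom : Type} (T : DTheory Atom) (I : DInterp Atom) : Prop :=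
  I.Coherent ∧ ModelConditions T I

/-- A conclusion holds in an interpretation. -/
def DLHolds {Atom : Type} (I : DInterp Atom) : Concl Atom → Prop
  | .plusDelta q => I.del q = some true
  | .minusDelta q => I.del q = some false
  | .plusPartial q => I.par q = some true
  | .minusPartial q => I.par q = some false

/-!
One-step inference defines a monotone operator on sets of conclusions. Since a theory is finite,
each inference has only finitely many possible premises, so provability is the least fixed point of
this operator, whereas models are its consistent fixed points. Hence provable conclusions hold in
every model, and it remains to see that the least fixed point is itself consistent. The negative
inference rules are the strong negations of the positive ones, so the operator commutes with the
duality that sends a set to the conclusions whose opposites lie outside it. The dual of the least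
fixed point is therefore again a fixed point, and the inclusion of the least fixed point in its dual
is exactly consistency.
-/

section

variable {Atom : Type} {T : DTheory Atom} {S S' : Set (Concl Atom)} {P Q : List (Concl Atom)}
  {c : Concl Atom}

/-- The immediate consequence relation: `c` is inferred in one step from the set `S`. The clauses
are those of `Licensed`, with an arbitrary set in place of the list of earlier conclusions. -/
def DTheory.Follows (T : DTheory Atom) (S : Set (Concl Atom)) : Concl Atom → Prop
  | .plusDelta q =>
      q ∈ T.facts ∨
      ∃ r ∈ T.rules, r.kind = RuleKind.strict ∧ r.head = q ∧ ∀ a ∈ r.body, .plusDelta a ∈ S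
  | .minusDelta q =>
      q ∉ T.facts ∧
      ∀ r ∈ T.rules, r.kind = RuleKind.strict → r.head = q → ∃ a ∈ r.body, .minusDelta a ∈ S
  | .plusPartial q =>
      .plusDelta q ∈ S ∨
      ((∃ r ∈ T.rules, r.isSd ∧ r.head = q ∧ ∀ a ∈ r.body, .plusPartial a ∈ S) ∧
        .minusDelta q.compl ∈ S ∧
        ∀ s ∈ T.rules, s.head = q.compl →
          (∃ a ∈ s.body, .minusPartial a ∈ S) ∨
          ∃ t ∈ T.rules, t.isSd ∧ t.head = q ∧ T.sup t s ∧ ∀ a ∈ t.body, .plusPartial a ∈ S)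
  | .minusPartial q =>
      .minusDelta q ∈ S ∧
      ((∀ r ∈ T.rules, r.isSd → r.head = q → ∃ a ∈ r.body, .minusPartial a ∈ S) ∨
        .plusDelta q.compl ∈ S ∨
        ∃ s ∈ T.rules, s.head = q.compl ∧ (∀ a ∈ s.body, .plusPartial a ∈ S) ∧
          ∀ t ∈ T.rules, t.isSd → t.head = q →
            (∃ a ∈ t.body, .minusPartial a ∈ S) ∨ ¬ T.sup t s)

theorem licensed_iff_follows : Licensed T P c ↔ T.Follows {d | d ∈ P} c := by
  cases c <;> rfl

/-- The literal that a conclusion tags. -/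
def Concl.lit : Concl Atom → Lit Atom
  | .plusDelta q | .minusDelta q | .plusPartial q | .minusPartial q => q

/-- The conclusions that can occur as premises of an inference of `c`, overapproximated by looking
only at the tagged literals. -/
def DTheory.premises (T : DTheory Atom) (c : Concl Atom) : Set (Concl Atom) :=
  {d | d.lit = c.lit ∨ d.lit = c.lit.compl ∨ ∃ r ∈ T.rules, d.lit ∈ r.body}

theorem Concl.finite_setOf_lit_mem {L : Set (Lit Atom)} (hL : L.Finite) :
    {d : Concl Atom | d.lit ∈ L}.Finite := by
  refine (hL.biUnion fun a _ ↦ Set.toFinite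
    {Concl.plusDelta a, .minusDelta a, .plusPartial a, .minusPartial a}).subset fun d hd ↦ ?_
  exact Set.mem_biUnion hd (by cases d <;> simp [Concl.lit])

theorem DTheory.finite_premises (T : DTheory Atom) (c : Concl Atom) : (T.premises c).Finite := by
  have hL : ({c.lit, c.lit.compl} ∪ ⋃ r ∈ T.rules, (r.body : Set (Lit Atom))).Finite :=
    (Set.toFinite _).union (T.rules.finite_toSet.biUnion fun r _ ↦ r.body.finite_toSet)
  refine (Concl.finite_setOf_lit_mem hL).subset fun d hd ↦ ?_
  simpa [premises, or_assoc] using hd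

namespace DTheory

theorem Follows.of_inter_premises_subset (h : T.Follows S c) (hS : S ∩ T.premises c ⊆ S') :
    T.Follows S' c := by
  simp only [Set.subset_def, Set.mem_inter_iff, premises, Set.mem_ofPred_eq] at hS
  cases c <;> grind [Follows, Concl.lit]

theorem Follows.mono (h : T.Follows S c) (hS : S ⊆ S') : T.Follows S' c :=
  h.of_inter_premises_subset (Set.inter_subset_left.trans hS)

/-- The immediate consequence operator, sending a set of conclusions to those inferred from it in
one step. -/
def consequence (T : DTheory Atom) : Set (Concl Atom) →o Set (Concl Atom) where
  toFun S := {c | T.Follows S c}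
  monotone' _ _ hS _ h := h.mono hS

end DTheory

theorem Licensed.mono (h : Licensed T P c) (hPQ : P ⊆ Q) : Licensed T Q c :=
  licensed_iff_follows.2 ((licensed_iff_follows.1 h).mono hPQ)

theorem dlDerivation_concat :
    DLDerivation T (P ++ [c]) ↔ DLDerivation T P ∧ Licensed T P c := by
  simp only [DLDerivation, Fin.forall_iff, List.get_eq_getElem, List.length_append,
    List.length_singleton, Nat.forall_lt_succ_right', List.getElem_concat_length, List.take_left]
  grind

theorem DLDerivation.append (hP : DLDerivation T P) (hQ : DLDerivation T Q) :
    DLDerivation T (P ++ Q) := by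
  induction Q using List.reverseRecOn with
  | nil => rwa [List.append_nil]
  | append_singleton Q d ih =>
    obtain ⟨hQ, hd⟩ := dlDerivation_concat.1 hQ
    rw [← List.append_assoc]
    exact dlDerivation_concat.2 ⟨ih hQ, hd.mono (List.subset_append_right P Q)⟩

theorem DLDerivation.mem_of_consequence_subset (hP : DLDerivation T P)
    (hS : T.consequence S ⊆ S) : ∀ d ∈ P, d ∈ S := by
  induction P using List.reverseRecOn with
  | nil => simp
  | append_singleton P d ih =>
    obtain ⟨hP, hd⟩ := dlDerivation_concat.1 hP
    rw [List.forall_mem_append, List.forall_mem_singleton]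
    exact ⟨ih hP, hS ((licensed_iff_follows.1 hd).mono (ih hP))⟩

theorem exists_dlDerivation_of_finite (hS : S.Finite) (h : ∀ d ∈ S, DLProves T d) :
    ∃ P, DLDerivation T P ∧ ∀ d ∈ S, d ∈ P := by
  induction S, hS using Set.Finite.induction_on with
  | empty => exact ⟨[], nofun, by simp⟩
  | insert _ _ ih =>
    rw [Set.forall_mem_insert] at h
    obtain ⟨P, hP, hSP⟩ := ih h.2
    obtain ⟨Q, hQ, hlast⟩ := h.1
    refine ⟨P ++ Q, hP.append hQ, Set.forall_mem_insert.2 ⟨?_, fun d hd ↦ ?_⟩⟩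
    · exact List.mem_append_right P (List.mem_of_getLast? hlast)
    · exact List.mem_append_left Q (hSP d hd)

theorem consequence_dlProves_subset (T : DTheory Atom) :
    T.consequence {c | DLProves T c} ⊆ {c | DLProves T c} := by
  intro c hc
  obtain ⟨P, hP, hmem⟩ := exists_dlDerivation_of_finite
    (S := {d | DLProves T d} ∩ T.premises c) ((T.finite_premises c).inter_of_right _)
    fun _ hd ↦ hd.1
  have hlicensed : Licensed T P c :=
    licensed_iff_follows.2 (DTheory.Follows.of_inter_premises_subset hc hmem)
  exact ⟨P ++ [c], dlDerivation_concat.2 ⟨hP, hlicensed⟩, List.getLast?_concat⟩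

theorem dlProves_iff_mem_lfp : DLProves T c ↔ c ∈ T.consequence.lfp := by
  constructor
  · rintro ⟨P, hP, hlast⟩
    exact hP.mem_of_consequence_subset T.consequence.map_lfp.le c (List.mem_of_getLast? hlast)
  · exact fun h ↦ T.consequence.lfp_le (consequence_dlProves_subset T) h

/-- The conclusion about the same literal at the same level (`Δ` or `∂`) with the opposite sign. -/
def Concl.opposite : Concl Atom → Concl Atom
  | .plusDelta q => .minusDelta q
  | .minusDelta q => .plusDelta q
  | .plusPartial q => .minusPartial q
  | .minusPartial q => .plusPartial q

/-- The conclusions whose opposites are not in `S`. Thus `S ⊆ Concl.dual S` says that `S` is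
consistent. -/
def Concl.dual (S : Set (Concl Atom)) : Set (Concl Atom) := {c | c.opposite ∉ S}

-- The principle of strong negation: by De Morgan's laws, each clause of `Follows` is the negation
-- of the clause for the opposite sign with `d ∈ S` replaced by `d.opposite ∉ S`.
theorem consequence_dual (T : DTheory Atom) (S : Set (Concl Atom)) :
    T.consequence (Concl.dual S) = Concl.dual (T.consequence S) := by
  ext c
  change T.Follows (Concl.dual S) c ↔ ¬ T.Follows S c.opposite
  cases c <;> grind [DTheory.Follows, Concl.dual, Concl.opposite]

theorem lfp_consequence_subset_dual (T : DTheory Atom) :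
    T.consequence.lfp ⊆ Concl.dual T.consequence.lfp :=
  T.consequence.lfp_le_fixed (by rw [consequence_dual, OrderHom.map_lfp])

theorem kleeneAll_eq_false {f : Lit Atom → Option Bool} {A : Finset (Lit Atom)} :
    kleeneAll f A = some false ↔ ∃ a ∈ A, f a = some false := by
  unfold kleeneAll
  split_ifs <;> grind

theorem kleeneAll_eq_true {f : Lit Atom → Option Bool} {A : Finset (Lit Atom)} :
    kleeneAll f A = some true ↔ ∀ a ∈ A, f a = some true := by
  unfold kleeneAll
  split_ifs <;> grind

theorem Concl.forall {p : Concl Atom → Prop} :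
    (∀ c, p c) ↔ (∀ q, p (.plusDelta q)) ∧ (∀ q, p (.minusDelta q)) ∧
      (∀ q, p (.plusPartial q)) ∧ ∀ q, p (.minusPartial q) :=
  ⟨fun h ↦ ⟨fun _ ↦ h _, fun _ ↦ h _, fun _ ↦ h _, fun _ ↦ h _⟩,
    fun h c ↦ by cases c <;> simp only [h]⟩

theorem modelConditions_iff {I : DInterp Atom} :
    ModelConditions T I ↔ T.consequence {c | DLHolds I c} = {c | DLHolds I c} := by
  rw [eq_comm]
  simp only [ModelConditions, kleeneAll_eq_true, kleeneAll_eq_false, DTheory.consequence,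
    Set.ext_iff, OrderHom.coe_mk, Set.mem_ofPred_eq, Concl.forall, DTheory.Follows, DLHolds,
    and_comm (a := T.sup _ _)]

theorem ModelConditions.coherent {I : DInterp Atom} (h : ModelConditions T I) : I.Coherent :=
  ⟨fun q hq ↦ (h.2.2.1 q).2 (.inl hq), fun q hq ↦ ((h.2.2.2 q).1 hq).1⟩

theorem isModel_iff {I : DInterp Atom} :
    IsModel T I ↔ T.consequence {c | DLHolds I c} = {c | DLHolds I c} :=
  ⟨fun h ↦ modelConditions_iff.1 h.2,
    fun h ↦ ⟨(modelConditions_iff.2 h).coherent, modelConditions_iff.2 h⟩⟩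

open Classical in
/-- The interpretation in which exactly the conclusions in `S` hold. When `S` is inconsistent,
positive conclusions take precedence. -/
noncomputable def DInterp.ofConclusions (S : Set (Concl Atom)) : DInterp Atom where
  del q := if .plusDelta q ∈ S then some true else if .minusDelta q ∈ S then some false else none
  par q :=
    if .plusPartial q ∈ S then some true else if .minusPartial q ∈ S then some false else none

theorem setOf_dlHolds_ofConclusions (hS : S ⊆ Concl.dual S) :
    {c | DLHolds (DInterp.ofConclusions S) c} = S := by
  ext c
  change DLHolds (DInterp.ofConclusions S) c ↔ c ∈ S
  have hconsistent : c ∈ S → c.opposite ∉ S := @hS c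
  cases c <;> simp only [DLHolds, DInterp.ofConclusions, Concl.opposite] at hconsistent ⊢ <;> grind

theorem exists_isModel_setOf_dlHolds_eq_lfp (T : DTheory Atom) :
    ∃ I, IsModel T I ∧ {c | DLHolds I c} = T.consequence.lfp := by
  have hholds := setOf_dlHolds_ofConclusions (lfp_consequence_subset_dual T)
  refine ⟨.ofConclusions T.consequence.lfp, isModel_iff.2 ?_, hholds⟩
  rw [hholds, OrderHom.map_lfp]

theorem DL_plusPartial_char_general (T : DTheory Atom) (c : Concl Atom) :
    DLProves T c ↔ ∀ I : DInterp Atom, IsModel T I → DLHolds I c := by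
  rw [dlProves_iff_mem_lfp]
  constructor
  · intro hc I hI
    exact T.consequence.lfp_le_fixed (isModel_iff.1 hI) hc
  · intro h
    obtain ⟨I, hI, hholds⟩ := exists_isModel_setOf_dlHolds_eq_lfp T
    exact hholds.subset (h I hI)

end

/-- Characterization of defeasible provability. -/
theorem DL_plusPartial_char {Atom : Type} [Countable Atom] [DecidableEq Atom]
    (T : DTheory Atom) (hacyc : SupAcyclic T) (q : Lit Atom) :
    DLProves T (Concl.plusPartial q) ↔
      ∀ I : DInterp Atom, IsModel T I → I.par q = some true :=
  DL_plusPartial_char_general T (.plusPartial q)
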